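/- Let p be a prime with p ≠ 2 and p ≠ 5, and let 0 ≤ k ≤ m be integers. Set m' = ⌊m/z(p)⌋, k' = ⌊k/z(p)⌋, r = m mod z(p), and s = k mod z(p). Then ν_p( C(m,k)_F ) = ν_p( binomial(m',k') ) + [r < s]·( ν_p(⌊(m − k + z(p))/z(p)⌋) + ν_p(F_{z(p)}) ). -/

import Mathlib

/-!
The valuation of the Fibonomial coefficient is read off from the valuations of the Fibonacci
numbers themselves. Put `z = z(p)`. Since `gcd (F_m, F_n) = F_{gcd (m, n)}`, the prime `p` divides
`F_n` exactly when `z ∣ n`, and a lifting-the-exponent law `ν(F_{zn}) = ν(n) + ν(F_z)` holds for odd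
`p`. The law comes from raising `φ ^ N = F_N φ + F_{N-1}` to the `n`-th power, which expresses
`F_{Nn}` as a binomial sum (`fib_mul_eq_sum`): if `p ∣ F_N`, its linear term `n F_N F_{N-1}^{n-1}`
decides the valuation both for `p ∤ n` and for `n = p`.

Hence the product `F_1 ⋯ F_n` has valuation `⌊n/z⌋ ν(F_z) + ν(⌊n/z⌋!)`
(`padicValNat_fibFactorial`). As in the ordinary case, the Fibonomial coefficient is a quotient of
three such products, so only `⌊m/z⌋ - ⌊k/z⌋ - ⌊(m-k)/z⌋ ∈ {0, 1}` has to be computed: it is the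
carry `[r < s]`, and a carry turns `(m' - k')!` into `⌊(m-k)/z⌋! · (⌊(m-k)/z⌋ + 1)`.
-/

/-- The Fibonomial coefficient `C(m,k)_F = (F_{m-k+1} ⋯ F_m)/(F_1 ⋯ F_k)`,
with `C(m,0)_F = 1` and `C(m,k)_F = 0` for `k > m`. -/
def fibBinom (m k : ℕ) : ℕ :=
  (∏ i ∈ Finset.range k, Nat.fib (m - i)) / ∏ i ∈ Finset.range k, Nat.fib (i + 1)

/-- The rank of appearance `z(n)`: the least positive `m` with `n ∣ F_m`. -/
noncomputable def fibRank (n : ℕ) : ℕ := sInf {m : ℕ | 0 < m ∧ n ∣ Nat.fib m}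

/-- The sum of the digits of `n` in base `q`. -/
def digitSum (q n : ℕ) : ℕ := (Nat.digits q n).sum

open Finset

/-! ### Lifting the exponent for Fibonacci numbers -/

/-- `φ ^ N = F_N φ + F_{N-1}` raised to the `n`-th power and expanded, with `N = M + 1`; Binet's
formula then extracts the Fibonacci numbers. -/
lemma fib_mul_eq_sum (M n : ℕ) :
    Nat.fib ((M + 1) * n) = ∑ j ∈ range (n + 1),
      Nat.fib (M + 1) ^ j * Nat.fib M ^ (n - j) * n.choose j * Nat.fib j := by
  have h1 := add_pow (Real.goldenRatio * (Nat.fib (M + 1) : ℝ)) (Nat.fib M : ℝ) n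
  have h2 := add_pow (Real.goldenConj * (Nat.fib (M + 1) : ℝ)) (Nat.fib M : ℝ) n
  rw [Real.goldenRatio_mul_fib_succ_add_fib, ← pow_mul] at h1
  rw [Real.goldenConj_mul_fib_succ_add_fib, ← pow_mul] at h2
  have : (Nat.fib ((M + 1) * n) : ℝ) = ∑ j ∈ range (n + 1),
      (Nat.fib (M + 1) : ℝ) ^ j * (Nat.fib M : ℝ) ^ (n - j) * (n.choose j : ℝ) * Nat.fib j := by
    rw [Real.coe_fib_eq, h1, h2, ← sum_sub_distrib, sum_div]
    refine sum_congr rfl fun j _ => ?_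
    rw [Real.coe_fib_eq j, mul_pow, mul_pow]
    ring
  exact_mod_cast this

/-- The binomial sum with its linear term split off (the constant term vanishes as `F_0 = 0`). -/
lemma fib_mul_eq_linear_add_tail (M t : ℕ) :
    Nat.fib ((M + 1) * (t + 1)) =
      (∑ j ∈ range t, Nat.fib (M + 1) ^ (j + 2) * Nat.fib M ^ (t + 1 - (j + 2)) *
        (t + 1).choose (j + 2) * Nat.fib (j + 2)) +
      Nat.fib (M + 1) * ((t + 1) * Nat.fib M ^ t) := by
  rw [fib_mul_eq_sum, sum_range_succ', sum_range_succ']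
  simp
  ring

lemma not_dvd_fib_pred {p M : ℕ} (hp : p.Prime) (h : p ∣ Nat.fib (M + 1)) : ¬ p ∣ Nat.fib M :=
  fun h' => hp.one_lt.ne' (Nat.dvd_one.mp
    ((Nat.fib_coprime_fib_succ M).gcd_eq_one ▸ Nat.dvd_gcd h' h))

lemma padicValNat_fib_mul_of_not_dvd {p N n : ℕ} (hp : p.Prime) (hN : 0 < N)
    (h : p ∣ Nat.fib N) (hn : ¬ p ∣ n) :
    padicValNat p (Nat.fib (N * n)) = padicValNat p (Nat.fib N) := by
  have := Fact.mk hp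
  obtain ⟨M, rfl⟩ := Nat.exists_eq_succ_of_ne_zero hN.ne'
  obtain ⟨t, rfl⟩ := Nat.exists_eq_succ_of_ne_zero (n := n) (by rintro rfl; simp at hn)
  simp only [Nat.succ_eq_add_one] at *
  have key : p * Nat.fib (M + 1) ∣ ∑ j ∈ range t, Nat.fib (M + 1) ^ (j + 2) *
      Nat.fib M ^ (t + 1 - (j + 2)) * (t + 1).choose (j + 2) * Nat.fib (j + 2) := by
    refine dvd_sum fun j _ => ?_
    have : p * Nat.fib (M + 1) ∣ Nat.fib (M + 1) ^ (j + 2) :=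
      (mul_dvd_mul_right h _).trans ((by rw [sq] : _ = Nat.fib (M + 1) ^ 2) ▸ pow_dvd_pow _ (by omega))
    exact ((this.mul_right _).mul_right _).mul_right _
  obtain ⟨w, hw⟩ := key
  have e : Nat.fib ((M + 1) * (t + 1)) = Nat.fib (M + 1) * (p * w + (t + 1) * Nat.fib M ^ t) := by
    rw [fib_mul_eq_linear_add_tail, hw]; ring
  have nd : ¬ p ∣ p * w + (t + 1) * Nat.fib M ^ t := by
    rw [Nat.dvd_add_right (dvd_mul_right p w), hp.dvd_mul]
    rintro (h' | h')
    · exact hn h'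
    · exact not_dvd_fib_pred hp h (hp.dvd_of_dvd_pow h')
  rw [e, padicValNat.mul (by simp) (by rintro h0; simp [h0] at nd),
    padicValNat.eq_zero_of_not_dvd nd, add_zero]

/-- Here `p ≠ 2` matters: the last term `F_N ^ p F_p` of the binomial sum carries no binomial factor
`p`, and `p ^ 2 F_N` divides it only because `p ≥ 3`. -/
lemma padicValNat_fib_mul_prime {p N : ℕ} (hp : p.Prime) (hp2 : p ≠ 2) (hN : 0 < N)
    (h : p ∣ Nat.fib N) :
    padicValNat p (Nat.fib (N * p)) = padicValNat p (Nat.fib N) + 1 := by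
  have := Fact.mk hp
  obtain ⟨M, rfl⟩ := Nat.exists_eq_succ_of_ne_zero hN.ne'
  obtain ⟨t, ht⟩ := Nat.exists_eq_succ_of_ne_zero hp.ne_zero
  simp only [Nat.succ_eq_add_one] at *
  have h2 := hp.two_le
  have key : p * p * Nat.fib (M + 1) ∣ ∑ j ∈ range t, Nat.fib (M + 1) ^ (j + 2) *
      Nat.fib M ^ (t + 1 - (j + 2)) * (t + 1).choose (j + 2) * Nat.fib (j + 2) := by
    refine dvd_sum fun j hj => ?_
    rw [mem_range] at hj
    refine Dvd.dvd.mul_right ?_ _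
    rw [mul_right_comm (Nat.fib (M + 1) ^ (j + 2))]
    refine Dvd.dvd.mul_right ?_ _
    by_cases hjp : j + 2 = p
    · refine Dvd.dvd.mul_right ?_ _
      calc p * p * Nat.fib (M + 1)
          ∣ Nat.fib (M + 1) * Nat.fib (M + 1) * Nat.fib (M + 1) :=
            mul_dvd_mul_right (mul_dvd_mul h h) _
        _ = Nat.fib (M + 1) ^ 3 := by ring
        _ ∣ _ := pow_dvd_pow _ (by omega)
    · have hc : p ∣ (t + 1).choose (j + 2) :=
        ht ▸ hp.dvd_choose_self (by omega) (by omega)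
      calc p * p * Nat.fib (M + 1) = p * Nat.fib (M + 1) * p := by ring
        _ ∣ Nat.fib (M + 1) * Nat.fib (M + 1) * (t + 1).choose (j + 2) :=
            mul_dvd_mul (mul_dvd_mul_right h _) hc
        _ = Nat.fib (M + 1) ^ 2 * (t + 1).choose (j + 2) := by ring
        _ ∣ _ := mul_dvd_mul_right (pow_dvd_pow _ (by omega)) _
  obtain ⟨w, hw⟩ := key
  have e : Nat.fib ((M + 1) * p) = Nat.fib (M + 1) * (p * (p * w + Nat.fib M ^ t)) := by
    have := fib_mul_eq_linear_add_tail M t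
    rw [hw, ← ht] at this
    rw [this]; ring
  have nd : ¬ p ∣ p * w + Nat.fib M ^ t := by
    rw [Nat.dvd_add_right (dvd_mul_right p w)]
    exact fun h' => not_dvd_fib_pred hp h (hp.dvd_of_dvd_pow h')
  have n0 : p * w + Nat.fib M ^ t ≠ 0 := by intro h0; simp [h0] at nd
  rw [e, padicValNat.mul (by simp) (mul_ne_zero hp.ne_zero n0), padicValNat.mul hp.ne_zero n0,
    padicValNat.eq_zero_of_not_dvd nd, padicValNat_self]

/-- Lifting the exponent for Fibonacci numbers at an odd prime. -/
lemma padicValNat_fib_mul {p N : ℕ} (hp : p.Prime) (hp2 : p ≠ 2) (hN : 0 < N)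
    (h : p ∣ Nat.fib N) (n : ℕ) (hn : 0 < n) :
    padicValNat p (Nat.fib (N * n)) = padicValNat p n + padicValNat p (Nat.fib N) := by
  have := Fact.mk hp
  induction n using Nat.strong_induction_on with
  | _ n ih =>
    by_cases hd : p ∣ n
    · obtain ⟨l, rfl⟩ := hd
      have hl : 0 < l := Nat.pos_of_mul_pos_left hn
      have hlt : l < p * l := by nlinarith [hp.two_le]
      have e : N * (p * l) = N * l * p := by ring
      rw [e, padicValNat_fib_mul_prime hp hp2 (Nat.mul_pos hN hl)
        (h.trans (Nat.fib_dvd _ _ (dvd_mul_right N l))), ih l hlt hl,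
        padicValNat.mul hp.ne_zero hl.ne', padicValNat_self]
      ring
    · rw [padicValNat_fib_mul_of_not_dvd hp hN h hd, padicValNat.eq_zero_of_not_dvd hd, zero_add]

/-! ### The rank of appearance -/

/-- Every prime divides some `F_n` with `n > 0`: the Fibonacci step `(x, y) ↦ (y, x + y)` is a
permutation of the finite set `𝔽_p × 𝔽_p`, so the orbit of `(F_0, F_1) = (0, 1)` returns. -/
lemma exists_pos_dvd_fib {p : ℕ} (hp : p.Prime) : ∃ n, 0 < n ∧ p ∣ Nat.fib n := by
  have := Fact.mk hp
  let f : Equiv.Perm (ZMod p × ZMod p) :=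
    { toFun := fun x => (x.2, x.1 + x.2)
      invFun := fun x => (x.2 - x.1, x.1)
      left_inv := fun x => by simp
      right_inv := fun x => by simp }
  have hf : ∀ n : ℕ, (f ^ n) (0, 1) = ((Nat.fib n : ZMod p), (Nat.fib (n + 1) : ZMod p)) := by
    intro n
    induction n with
    | zero => simp
    | succ n ih =>
      rw [pow_succ', Equiv.Perm.mul_apply, ih, Nat.fib_add_two]
      simp [f]
  refine ⟨orderOf f, orderOf_pos f, ?_⟩
  have := hf (orderOf f)
  rw [pow_orderOf_eq_one] at this
  exact (ZMod.natCast_eq_zero_iff _ _).mp (congrArg Prod.fst this).symm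

lemma fibRank_spec {p : ℕ} (hp : p.Prime) : 0 < fibRank p ∧ p ∣ Nat.fib (fibRank p) :=
  Nat.sInf_mem (exists_pos_dvd_fib hp)

lemma dvd_fib_iff {p : ℕ} (hp : p.Prime) (n : ℕ) : p ∣ Nat.fib n ↔ fibRank p ∣ n := by
  obtain ⟨hz, hd⟩ := fibRank_spec hp
  refine ⟨fun h => ?_, fun h => hd.trans (Nat.fib_dvd _ _ h)⟩
  have hg : p ∣ Nat.fib (Nat.gcd (fibRank p) n) := Nat.fib_gcd _ _ ▸ Nat.dvd_gcd hd h
  have hle : fibRank p ≤ Nat.gcd (fibRank p) n :=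
    Nat.sInf_le ⟨Nat.gcd_pos_of_pos_left _ hz, hg⟩
  exact Nat.gcd_eq_left_iff_dvd.mp (le_antisymm (Nat.gcd_le_left _ hz) hle)

/-! ### Fibonacci factorials -/

/-- The Fibonacci factorial `F_1 F_2 ⋯ F_n`. -/
def fibFactorial (n : ℕ) : ℕ := ∏ i ∈ range n, Nat.fib (i + 1)

lemma fibFactorial_succ (n : ℕ) : fibFactorial (n + 1) = fibFactorial n * Nat.fib (n + 1) :=
  prod_range_succ _ _

lemma fibFactorial_ne_zero (n : ℕ) : fibFactorial n ≠ 0 :=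
  prod_ne_zero_iff.mpr fun _ _ => by simp

lemma padicValNat_fibFactorial {p : ℕ} (hp : p.Prime) (hp2 : p ≠ 2) (n : ℕ) :
    padicValNat p (fibFactorial n) = n / fibRank p * padicValNat p (Nat.fib (fibRank p)) +
      padicValNat p (n / fibRank p).factorial := by
  have := Fact.mk hp
  obtain ⟨hz, hd⟩ := fibRank_spec hp
  induction n with
  | zero => simp [fibFactorial]
  | succ n ih =>
    rw [fibFactorial_succ, padicValNat.mul (fibFactorial_ne_zero n) (by simp), ih, Nat.succ_div]
    split_ifs with h
    · have hq : n + 1 = fibRank p * (n / fibRank p + 1) := by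
        have h1 := Nat.succ_div (a := n) (b := fibRank p)
        rw [if_pos h] at h1
        rw [← h1, Nat.mul_div_cancel' h]
      have hv := padicValNat_fib_mul hp hp2 hz hd (n / fibRank p + 1) (Nat.succ_pos _)
      rw [← hq] at hv
      rw [hv, Nat.factorial_succ, padicValNat.mul (Nat.succ_ne_zero _) (Nat.factorial_ne_zero _)]
      ring
    · rw [padicValNat.eq_zero_of_not_dvd (fun h' => h ((dvd_fib_iff hp _).mp h'))]
      simp

/-- Integrality of the Fibonomial coefficients, by Pascal's rule in the form
`F_{n+k+2} = F_{n+1} F_k + F_{n+2} F_{k+1}`. -/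
lemma fibFactorial_mul_dvd (n k : ℕ) :
    fibFactorial n * fibFactorial k ∣ fibFactorial (n + k) := by
  induction n generalizing k with
  | zero => simp [fibFactorial]
  | succ n ihn =>
    induction k with
    | zero => simp [fibFactorial]
    | succ k ihk =>
      have e : Nat.fib (n + 1 + k + 1) =
          Nat.fib (n + 1) * Nat.fib k + Nat.fib (n + 1 + 1) * Nat.fib (k + 1) := Nat.fib_add _ _
      rw [← add_assoc, fibFactorial_succ (n + 1 + k), e, mul_add]
      refine dvd_add ?_ ?_
      · have h := ihn (k + 1)
        rw [show n + (k + 1) = n + 1 + k by ring] at h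
        calc fibFactorial (n + 1) * fibFactorial (k + 1)
            = fibFactorial n * fibFactorial (k + 1) * Nat.fib (n + 1) := by
              rw [fibFactorial_succ n]; ring
          _ ∣ fibFactorial (n + 1 + k) * Nat.fib (n + 1) := mul_dvd_mul_right h _
          _ ∣ _ := mul_dvd_mul_left _ (dvd_mul_right _ _)
      · calc fibFactorial (n + 1) * fibFactorial (k + 1)
            = fibFactorial (n + 1) * fibFactorial k * Nat.fib (k + 1) := by
              rw [fibFactorial_succ k]; ring
          _ ∣ fibFactorial (n + 1 + k) * Nat.fib (k + 1) := mul_dvd_mul_right ihk _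
          _ ∣ _ := mul_dvd_mul_left _ (dvd_mul_left _ _)

lemma prod_fib_sub_mul (l k : ℕ) :
    (∏ i ∈ range k, Nat.fib (l + k - i)) * fibFactorial l = fibFactorial (l + k) := by
  induction k with
  | zero => simp
  | succ k ih =>
    rw [prod_range_succ', ← add_assoc, fibFactorial_succ, ← ih]
    simp only [Nat.add_sub_add_right, Nat.sub_zero]
    ring

/-- The natural-number division defining `fibBinom` is exact, so the Fibonomial coefficient is a
quotient of Fibonacci factorials. -/
lemma fibBinom_mul (l k : ℕ) :
    fibBinom (l + k) k * fibFactorial k * fibFactorial l = fibFactorial (l + k) := by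
  have h := fibFactorial_mul_dvd l k
  rw [← prod_fib_sub_mul, mul_comm (fibFactorial l)] at h
  have h' := Nat.dvd_of_mul_dvd_mul_right (Nat.pos_of_ne_zero (fibFactorial_ne_zero l)) h
  have hb : fibBinom (l + k) k * fibFactorial k = ∏ i ∈ range k, Nat.fib (l + k - i) :=
    Nat.div_mul_cancel h'
  rw [hb, prod_fib_sub_mul]

theorem p_adic_valuation_fibonomial
    (p : ℕ) (hp : p.Prime) (hp2 : p ≠ 2) (hp5 : p ≠ 5)
    (m k : ℕ) (hkm : k ≤ m)
    (m' k' r s : ℕ)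
    (hm' : m' = m / fibRank p) (hk' : k' = k / fibRank p)
    (hr : r = m % fibRank p) (hs : s = k % fibRank p) :
    padicValNat p (fibBinom m k)
      = padicValNat p (Nat.choose m' k')
        + (if r < s then 1 else 0) *
          (padicValNat p ((m - k + fibRank p) / fibRank p)
            + padicValNat p (Nat.fib (fibRank p))) := by
  have := Fact.mk hp
  obtain ⟨l, rfl⟩ := Nat.exists_eq_add_of_le' hkm
  obtain ⟨hz, -⟩ := fibRank_spec hp
  have hF := congrArg (padicValNat p) (fibBinom_mul l k)
  have hne : fibBinom (l + k) k ≠ 0 := by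
    intro h0
    have := fibBinom_mul l k
    rw [h0, zero_mul, zero_mul] at this
    exact fibFactorial_ne_zero _ this.symm
  rw [padicValNat.mul (mul_ne_zero hne (fibFactorial_ne_zero _)) (fibFactorial_ne_zero _),
    padicValNat.mul hne (fibFactorial_ne_zero _)] at hF
  simp only [padicValNat_fibFactorial hp hp2] at hF
  rw [Nat.add_sub_cancel, Nat.add_div_right _ hz]
  -- The carry: `r < s` exactly when the residues of `k` and `m - k = l` add up to at least `z(p)`.
  have hcarry : r < s ↔ fibRank p ≤ l % fibRank p + k % fibRank p := by
    have hl := Nat.mod_lt l hz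
    have hk := Nat.mod_lt k hz
    rw [hr, hs, Nat.add_mod]
    by_cases hc : fibRank p ≤ l % fibRank p + k % fibRank p
    · rw [Nat.mod_eq_sub_mod hc, Nat.mod_eq_of_lt (by omega)]
      omega
    · rw [Nat.mod_eq_of_lt (by omega)]
      omega
  have hdiv := Nat.add_div (a := l) (b := k) hz
  rw [← hm', ← hk'] at hF
  rw [← hm', ← hk'] at hdiv
  have hle : k' ≤ m' := by rw [hm', hk']; exact Nat.div_le_div_right hkm
  have hch := congrArg (padicValNat p) (Nat.choose_mul_factorial_mul_factorial hle)
  rw [padicValNat.mul (mul_ne_zero (Nat.choose_pos hle).ne' (Nat.factorial_ne_zero _))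
    (Nat.factorial_ne_zero _),
    padicValNat.mul (Nat.choose_pos hle).ne' (Nat.factorial_ne_zero _)] at hch
  by_cases hc : r < s
  · rw [if_pos (hcarry.mp hc)] at hdiv
    rw [if_pos hc]
    rw [show m' - k' = l / fibRank p + 1 by omega, Nat.factorial_succ,
      padicValNat.mul (Nat.succ_ne_zero _) (Nat.factorial_ne_zero _)] at hch
    rw [← hch, hdiv] at hF
    rw [hdiv]
    linarith
  · rw [if_neg (fun h => hc (hcarry.mpr h))] at hdiv
    rw [if_neg hc]
    rw [show m' - k' = l / fibRank p by omega] at hch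
    rw [← hch, hdiv] at hF
    rw [hdiv]
    linarith
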